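/- Let H be a complex Banach space, let L : H → H be a continuous linear operator whose spectral radius equals a real number ρ with ρ > 1, and let F : H → H be a map with F(0) = 0 such that there exist a > 0, b > 0 and p > 0 with ‖F(u) − L u‖ ≤ b·‖u‖^{1+p} whenever ‖u‖ ≤ a. Then the equilibrium 0 of the iteration u_{n+1} = F(u_n) is exponentially unstable at rate ρ; that is, there exist ε > 0 and C > 0 such that for every δ > 0 there is u₀ ∈ H with 0 < ‖u₀‖ ≤ δ such that the sequence defined by u_{n+1} = F(u_n) satisfies ‖u_N‖ ≥ C·ρ^N·‖u₀‖ for every N ∈ ℕ for which max{‖u₀‖, ‖u₁‖, …, ‖u_N‖} ≤ ε. -/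

import Mathlib

theorem aux_pow_bound {H : Type*} [NormedAddCommGroup H] [NormedSpace ℂ H] [CompleteSpace H]
    (L : H →L[ℂ] H) (ρ σ : ℝ) (hρ : 1 < ρ) (hσ : ρ < σ)
    (hspec : spectralRadius ℂ L = ENNReal.ofReal ρ) :
    ∃ K > (0 : ℝ), ∀ n : ℕ, ‖L ^ n‖ ≤ K * σ ^ n := by
  have h1 := spectrum.pow_norm_pow_one_div_tendsto_nhds_spectralRadius L
  rw [hspec] at h1
  have h2 : ENNReal.ofReal ρ < ENNReal.ofReal σ :=
    (ENNReal.ofReal_lt_ofReal_iff (by linarith)).2 hσ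
  have h3 := h1.eventually_lt_const h2
  obtain ⟨n0, hn0⟩ := Filter.eventually_atTop.1 h3
  refine ⟨1 + ∑ j ∈ Finset.range (n0 + 1), ‖L ^ j‖, by positivity, fun n => ?_⟩
  have hs1 : 1 ≤ σ ^ n := one_le_pow₀ (by linarith)
  have hS : 0 ≤ ∑ j ∈ Finset.range (n0 + 1), ‖L ^ j‖ := by positivity
  by_cases hn : n < n0 + 1
  · have : ‖L ^ n‖ ≤ ∑ j ∈ Finset.range (n0 + 1), ‖L ^ j‖ :=
      Finset.single_le_sum (f := fun j => ‖L ^ j‖) (fun _ _ => norm_nonneg _)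
        (Finset.mem_range.2 hn)
    nlinarith
  · have h4 := hn0 n (by omega)
    have hnpos : (n : ℝ) ≠ 0 := by
      have : n ≠ 0 := by omega
      exact_mod_cast this
    rw [ENNReal.ofReal_lt_ofReal_iff (by linarith)] at h4
    have h5 : (‖L ^ n‖ ^ (1 / (n : ℝ))) ^ n ≤ σ ^ n :=
      pow_le_pow_left₀ (by positivity) h4.le n
    rw [← Real.rpow_natCast, ← Real.rpow_mul (norm_nonneg _), one_div_mul_cancel hnpos,
      Real.rpow_one] at h5
    nlinarith

theorem aux_approx {H : Type*} [NormedAddCommGroup H] [NormedSpace ℂ H] [CompleteSpace H]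
    (L : H →L[ℂ] H) (ρ : ℝ) (hρ : 1 < ρ)
    (hspec : spectralRadius ℂ L = ENNReal.ofReal ρ) :
    ∃ l : ℂ, ‖l‖ = ρ ∧ ∀ c > (0 : ℝ), ∃ v : H, ‖v‖ = 1 ∧ ‖L v - l • v‖ < c := by
  have hnt : Nontrivial H := by
    by_contra h
    rw [not_nontrivial_iff_subsingleton] at h
    have : L = 0 := by ext x; exact Subsingleton.elim _ _
    rw [this, spectrum.spectralRadius_zero] at hspec
    have := ENNReal.ofReal_pos.2 (show 0 < ρ by linarith)
    rw [← hspec] at this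
    exact lt_irrefl _ this
  obtain ⟨l, hl, hl2⟩ := spectrum.exists_nnnorm_eq_spectralRadius L
  have hlρ : ‖l‖ = ρ := by
    rw [hspec] at hl2
    have := congrArg ENNReal.toReal hl2
    rw [ENNReal.toReal_ofReal (by linarith)] at this
    simpa using this
  refine ⟨l, hlρ, ?_⟩
  intro c hc
  by_contra! hcon
  have hlow : ∀ v : H, c * ‖v‖ ≤ ‖L v - l • v‖ := by
    intro v
    by_cases hv : v = 0
    · simp [hv]
    have hv' : 0 < ‖v‖ := norm_pos_iff.2 hv
    have hh := hcon (((‖v‖⁻¹ : ℝ) : ℂ) • v) (by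
      rw [norm_smul, Complex.norm_real, norm_inv, norm_norm, inv_mul_cancel₀ hv'.ne'])
    rw [map_smul, smul_comm l, ← smul_sub, norm_smul, Complex.norm_real, norm_inv, norm_norm] at hh
    calc c * ‖v‖ ≤ (‖v‖⁻¹ * ‖L v - l • v‖) * ‖v‖ := by gcongr
      _ = _ := by field_simp
  -- the nearby point
  set q : ℝ := c / (4 * ρ) with hq
  have hq0 : 0 < q := by positivity
  set m : ℂ := ((1 + q : ℝ) : ℂ) * l with hm
  have hml : ‖m - l‖ = c / 4 := by
    have : m - l = ((q : ℝ) : ℂ) * l := by rw [hm]; push_cast; ring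
    rw [this, norm_mul, Complex.norm_real, hlρ, Real.norm_of_nonneg hq0.le, hq]
    field_simp
  have hmn : ρ < ‖m‖ := by
    rw [hm, norm_mul, Complex.norm_real, hlρ, Real.norm_of_nonneg (by positivity)]
    nlinarith
  have hmres : m ∈ resolventSet ℂ L := by
    apply spectrum.mem_resolventSet_of_spectralRadius_lt
    rw [hspec, ENNReal.ofReal_lt_coe_iff (by linarith)]
    simpa using hmn
  obtain ⟨x, hx⟩ := (spectrum.mem_resolventSet_iff.1 hmres)
  have hxinv : ‖((x⁻¹ : (H →L[ℂ] H)ˣ) : H →L[ℂ] H)‖ ≤ (3 * c / 4)⁻¹ := by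
    apply ContinuousLinearMap.opNorm_le_bound _ (by positivity)
    intro w
    set v := ((x⁻¹ : (H →L[ℂ] H)ˣ) : H →L[ℂ] H) w with hv
    have hxv : (x : H →L[ℂ] H) v = w := by
      rw [hv, ← ContinuousLinearMap.mul_apply, Units.mul_inv]; rfl
    have hw : w = m • v - L v := by
      rw [← hxv, hx]; simp [Algebra.algebraMap_eq_smul_one]
    have h1 := hlow v
    have h2 : L v - l • v = (m - l) • v - w := by rw [hw, sub_smul]; abel
    have h3 : ‖L v - l • v‖ ≤ c / 4 * ‖v‖ + ‖w‖ := by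
      rw [h2]
      refine (norm_sub_le _ _).trans ?_
      rw [norm_smul, hml]
    rw [inv_mul_eq_div, le_div_iff₀ (by positivity)]
    nlinarith
  have hxpos : 0 < ‖((x⁻¹ : (H →L[ℂ] H)ˣ) : H →L[ℂ] H)‖ := Units.norm_pos _
  have hnear : ‖(algebraMap ℂ (H →L[ℂ] H) l - L) - x‖ <
      ‖((x⁻¹ : (H →L[ℂ] H)ˣ) : H →L[ℂ] H)‖⁻¹ := by
    have : (algebraMap ℂ (H →L[ℂ] H) l - L) - x = algebraMap ℂ (H →L[ℂ] H) (l - m) := by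
      rw [hx, map_sub]; abel
    rw [this, norm_algebraMap', norm_sub_rev, hml]
    have : 3 * c / 4 ≤ ‖((x⁻¹ : (H →L[ℂ] H)ˣ) : H →L[ℂ] H)‖⁻¹ := by
      rw [le_inv_comm₀ (by positivity) hxpos]; exact hxinv
    linarith
  exact hl ⟨Units.ofNearby x _ hnear, by simp⟩

theorem aux_pow_approx {H : Type*} [NormedAddCommGroup H] [NormedSpace ℂ H]
    (L : H →L[ℂ] H) (l : ℂ) (n : ℕ) :
    ∃ A : ℝ, 0 ≤ A ∧ ∀ v : H, ‖(L ^ n) v - l ^ n • v‖ ≤ A * ‖L v - l • v‖ := by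
  induction n with
  | zero => exact ⟨0, le_rfl, fun v => by simp⟩
  | succ n ih =>
    obtain ⟨A, hA, h⟩ := ih
    refine ⟨‖L‖ * A + ‖l ^ n‖, by positivity, fun v => ?_⟩
    have : (L ^ (n + 1)) v - l ^ (n + 1) • v
        = L ((L ^ n) v - l ^ n • v) + l ^ n • (L v - l • v) := by
      rw [pow_succ', ContinuousLinearMap.mul_apply, map_sub, map_smul, smul_sub, smul_smul,
        ← pow_succ]
      abel
    rw [this]
    refine (norm_add_le _ _).trans ?_
    rw [norm_smul, add_mul, mul_assoc]
    gcongr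
    exact (L.le_opNorm _).trans (by gcongr; exact h v)

theorem aux_duhamel {H : Type*} [NormedAddCommGroup H] [NormedSpace ℂ H]
    (L : H →L[ℂ] H) (F : H → H) (u : H) (n : ℕ) :
    F^[n] u = (L ^ n) u +
      ∑ k ∈ Finset.range n, (L ^ (n - 1 - k)) (F (F^[k] u) - L (F^[k] u)) := by
  induction n with
  | zero => simp
  | succ n ih =>
    rw [Finset.sum_range_succ, Function.iterate_succ_apply']
    have h1 : ∑ k ∈ Finset.range n, (L ^ (n + 1 - 1 - k)) (F (F^[k] u) - L (F^[k] u))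
        = L (∑ k ∈ Finset.range n, (L ^ (n - 1 - k)) (F (F^[k] u) - L (F^[k] u))) := by
      rw [map_sum]
      refine Finset.sum_congr rfl fun k hk => ?_
      have hk := Finset.mem_range.1 hk
      have : n + 1 - 1 - k = (n - 1 - k) + 1 := by omega
      rw [this, pow_succ', ContinuousLinearMap.mul_apply]
    have h2 : n + 1 - 1 - n = 0 := by omega
    rw [h1, h2, pow_zero, ContinuousLinearMap.one_apply, pow_succ',
      ContinuousLinearMap.mul_apply, ← add_assoc, ← map_add, ← ih]
    abel

/-- If the spectral radius of `L` is `ρ > 1` and `F` agrees with `L` to higher order near `0`,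
then the equilibrium `0` of the iteration `u_{n+1} = F(u_n)` is exponentially unstable at
rate `ρ`. -/
theorem stmt_2 {H : Type*} [NormedAddCommGroup H] [NormedSpace ℂ H] [CompleteSpace H]
    (L : H →L[ℂ] H) (ρ : ℝ) (hρ : 1 < ρ) (hspec : spectralRadius ℂ L = ENNReal.ofReal ρ)
    (F : H → H) (hF0 : F 0 = 0)
    (a b p : ℝ) (ha : 0 < a) (hb : 0 < b) (hp : 0 < p)
    (hFL : ∀ u : H, ‖u‖ ≤ a → ‖F u - L u‖ ≤ b * ‖u‖ ^ (1 + p)) :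
    ∃ ε > (0 : ℝ), ∃ C > (0 : ℝ), ∀ δ > (0 : ℝ), ∃ u₀ : H, 0 < ‖u₀‖ ∧ ‖u₀‖ ≤ δ ∧
      ∀ N : ℕ, (∀ n ≤ N, ‖F^[n] u₀‖ ≤ ε) → C * ρ ^ N * ‖u₀‖ ≤ ‖F^[N] u₀‖ := by
  have hρ0 : 0 < ρ := by linarith
  set τ : ℝ := ρ ^ (1 + p) with hτ
  have hρτ : ρ < τ := by
    have := Real.rpow_lt_rpow_of_exponent_lt hρ (show (1 : ℝ) < 1 + p by linarith)
    rwa [Real.rpow_one] at this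
  obtain ⟨σ, hσ1, hσ2⟩ := exists_between hρτ
  have hσ0 : 0 < σ := by linarith
  have hτ0 : 0 < τ := by linarith
  have hτσ : 0 < τ - σ := by linarith
  obtain ⟨K, hK, hKL⟩ := aux_pow_bound L ρ σ hρ hσ1 hspec
  obtain ⟨l, hl, happ⟩ := aux_approx L ρ hρ hspec
  set D : ℝ := K * b * 2 ^ (1 + p) / (τ - σ) with hD
  have hD0 : 0 < D := by positivity
  obtain ⟨κ, hκ0, hκa, hκD⟩ : ∃ κ > (0 : ℝ), 2 * κ ≤ a ∧ D * κ ^ p ≤ 1 / 4 := by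
    refine ⟨min (a / 2) ((1 / (4 * D)) ^ (1 / p)), by positivity, ?_, ?_⟩
    · linarith [min_le_left (a / 2) ((1 / (4 * D)) ^ (1 / p))]
    · calc D * (min (a / 2) ((1 / (4 * D)) ^ (1 / p))) ^ p
          ≤ D * (((1 / (4 * D)) ^ (1 / p))) ^ p := by
            gcongr
            exact min_le_right _ _
        _ = 1 / 4 := by
            rw [← Real.rpow_mul (by positivity), one_div_mul_cancel hp.ne', Real.rpow_one]
            field_simp
  refine ⟨κ / 4, by positivity, 1 / 2, by norm_num, fun δ hδ => ?_⟩
  obtain ⟨M, hM⟩ := pow_unbounded_of_one_lt (κ / δ) hρ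
  have hρM : 0 < ρ ^ M := by positivity
  set s : ℝ := κ / ρ ^ M with hs
  have hs0 : 0 < s := by positivity
  have hsM : s * ρ ^ M = κ := by rw [hs]; field_simp
  have hsδ : s ≤ δ := by
    rw [hs, div_le_iff₀ hρM]
    rw [div_lt_iff₀ hδ] at hM
    linarith
  choose A hA0 hA using aux_pow_approx L l
  set T : ℝ := ∑ n ∈ Finset.range (M + 1), A n with hT
  have hT0 : 0 ≤ T := Finset.sum_nonneg fun n _ => hA0 n
  obtain ⟨v, hv1, hv⟩ := happ (1 / (4 * (T + 1))) (by positivity)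
  have hvn : ∀ n ≤ M, ‖(L ^ n) v - l ^ n • v‖ ≤ 1 / 4 := by
    intro n hn
    have h1 : A n ≤ T :=
      Finset.single_le_sum (f := A) (fun i _ => hA0 i) (Finset.mem_range.2 (by omega))
    calc _ ≤ A n * ‖L v - l • v‖ := hA n v
      _ ≤ (T + 1) * (1 / (4 * (T + 1))) := by gcongr; linarith
      _ = 1 / 4 := by field_simp
  set u : H := (s : ℂ) • v with hu
  have hun : ‖u‖ = s := by
    rw [hu, norm_smul, Complex.norm_real, hv1, mul_one, Real.norm_of_nonneg hs0.le]
  have hpow1 : ∀ n : ℕ, 1 ≤ ρ ^ n := fun n => one_le_pow₀ hρ.le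
  have hsn : ∀ n ≤ M, s * ρ ^ n ≤ κ := by
    intro n hn
    rw [← hsM]
    gcongr
    exact hρ.le
  have hLu : ∀ n ≤ M, ‖(L ^ n) u - l ^ n • u‖ ≤ 1 / 4 * (s * ρ ^ n) := by
    intro n hn
    rw [hu, map_smul, smul_comm (l ^ n), ← smul_sub, norm_smul, Complex.norm_real,
      Real.norm_of_nonneg hs0.le]
    have h1 := hvn n hn
    have h2 := hpow1 n
    calc _ ≤ s * (1 / 4) := by gcongr
      _ ≤ _ := by nlinarith
  have hlu : ∀ n, ‖l ^ n • u‖ = s * ρ ^ n := by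
    intro n
    rw [norm_smul, norm_pow, hl, hun, mul_comm]
  have key : ∀ n ≤ M, ‖F^[n] u - l ^ n • u‖ ≤ 1 / 2 * (s * ρ ^ n) := by
    intro n
    induction n using Nat.strong_induction_on with
    | _ n ih =>
    intro hn
    have hterm : ∀ k ∈ Finset.range n, ‖(L ^ (n - 1 - k)) (F (F^[k] u) - L (F^[k] u))‖ ≤
        K * b * (2 * s) ^ (1 + p) * (τ ^ k * σ ^ (n - 1 - k)) := by
      intro k hk
      have hk := Finset.mem_range.1 hk
      have h1 := ih k hk (by omega)
      have h2 : ‖F^[k] u‖ ≤ 2 * s * ρ ^ k := by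
        have := norm_le_norm_add_norm_sub (l ^ k • u) (F^[k] u)
        rw [hlu, norm_sub_rev] at this
        have h3 : 0 < s * ρ ^ k := by positivity
        linarith
      have h3 := hsn k (by omega)
      have h4 := hFL (F^[k] u) (by linarith)
      have h5 : ‖F^[k] u‖ ^ (1 + p) ≤ (2 * s) ^ (1 + p) * τ ^ k := by
        calc _ ≤ (2 * s * ρ ^ k) ^ (1 + p) := by gcongr
          _ = _ := by
            rw [Real.mul_rpow (by positivity) (by positivity), hτ, ← Real.rpow_natCast,
              ← Real.rpow_natCast, ← Real.rpow_mul hρ0.le, ← Real.rpow_mul hρ0.le,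
              mul_comm (k : ℝ)]
      calc _ ≤ ‖L ^ (n - 1 - k)‖ * ‖F (F^[k] u) - L (F^[k] u)‖ :=
            ContinuousLinearMap.le_opNorm _ _
        _ ≤ (K * σ ^ (n - 1 - k)) * (b * ((2 * s) ^ (1 + p) * τ ^ k)) := by
            gcongr
            · exact hKL _
            · exact h4.trans (by gcongr)
        _ = _ := by ring
    have hgeo : ∑ k ∈ Finset.range n, τ ^ k * σ ^ (n - 1 - k) ≤ τ ^ n / (τ - σ) := by
      rw [le_div_iff₀ hτσ, (Commute.all τ σ).geom_sum₂_mul n]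
      have : 0 < σ ^ n := by positivity
      linarith
    have hsum : ‖∑ k ∈ Finset.range n, (L ^ (n - 1 - k)) (F (F^[k] u) - L (F^[k] u))‖ ≤
        1 / 4 * (s * ρ ^ n) := by
      calc _ ≤ ∑ k ∈ Finset.range n, K * b * (2 * s) ^ (1 + p) * (τ ^ k * σ ^ (n - 1 - k)) :=
            norm_sum_le_of_le _ hterm
        _ = K * b * (2 * s) ^ (1 + p) * ∑ k ∈ Finset.range n, τ ^ k * σ ^ (n - 1 - k) := by
            rw [Finset.mul_sum]
        _ ≤ K * b * (2 * s) ^ (1 + p) * (τ ^ n / (τ - σ)) := by gcongr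
        _ = D * (s * ρ ^ n) ^ (1 + p) := by
            have e1 : τ ^ n = (ρ ^ n) ^ (1 + p) := by
              rw [hτ, ← Real.rpow_natCast, ← Real.rpow_natCast, ← Real.rpow_mul hρ0.le,
                ← Real.rpow_mul hρ0.le, mul_comm (n : ℝ)]
            rw [Real.mul_rpow (by positivity) (by positivity),
              Real.mul_rpow (by positivity) (by positivity), e1, hD]
            ring
        _ = D * (s * ρ ^ n) ^ p * (s * ρ ^ n) := by
            rw [Real.rpow_add (by positivity), Real.rpow_one]; ring
        _ ≤ D * κ ^ p * (s * ρ ^ n) := by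
            gcongr
            exact hsn n hn
        _ ≤ 1 / 4 * (s * ρ ^ n) := by gcongr
    rw [aux_duhamel L F u n, add_sub_right_comm]
    refine (norm_add_le _ _).trans ?_
    have := hLu n hn
    linarith
  have hlow : ∀ n ≤ M, 1 / 2 * (s * ρ ^ n) ≤ ‖F^[n] u‖ := by
    intro n hn
    have h1 := key n hn
    have h2 := norm_le_norm_add_norm_sub (F^[n] u) (l ^ n • u)
    rw [hlu] at h2
    linarith
  refine ⟨u, by rw [hun]; exact hs0, by rw [hun]; exact hsδ, fun N hN => ?_⟩
  by_cases hNM : N ≤ M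
  · have := hlow N hNM
    rw [hun]
    linarith
  · exfalso
    have h1 := hlow M le_rfl
    have h2 := hN M (by omega)
    rw [hsM] at h1
    linarith
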